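/- For the Case II knotted sphere, where x₄(u) = λ·x₃(u) for a constant λ ∈ ℝ and x₃(u) > 0 for all u, with unit-speed profile curve, the first fundamental form coefficients are E = 1, F = 0, G = (1 + λ²)·x₃(u)², and the Gaussian curvature K = −(1/(2W))·∂_u(G_u / W) equals K(u) = −x₃''(u)/x₃(u). -/

import Mathlib

open Real

noncomputable def dot4 (a b : Fin 4 → ℝ) : ℝ :=
  a 0 * b 0 + a 1 * b 1 + a 2 * b 2 + a 3 * b 3

theorem caseII_knotted_sphere_gaussian_curvature
    (x₁ x₂ x₃ x₄ : ℝ → ℝ)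
    (hx₁ : ContDiff ℝ (⊤ : ℕ∞) x₁) (hx₂ : ContDiff ℝ (⊤ : ℕ∞) x₂)
    (hx₃ : ContDiff ℝ (⊤ : ℕ∞) x₃) (hx₄ : ContDiff ℝ (⊤ : ℕ∞) x₄)
    (hunit : ∀ u, deriv x₁ u ^ 2 + deriv x₂ u ^ 2 + deriv x₃ u ^ 2 + deriv x₄ u ^ 2 = 1)
    (X : ℝ → ℝ → Fin 4 → ℝ)
    (hX : ∀ u v, X u v =
      ![x₁ u, x₂ u, x₃ u * Real.cos v - x₄ u * Real.sin v,
        x₃ u * Real.sin v + x₄ u * Real.cos v])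
    (Xu Xv : ℝ → ℝ → Fin 4 → ℝ)
    (hXu : ∀ u v, Xu u v = deriv (fun t => X t v) u)
    (hXv : ∀ u v, Xv u v = deriv (fun t => X u t) v)
    (lam : ℝ) (hx₄lam : ∀ u, x₄ u = lam * x₃ u)
    (hx₃pos : ∀ u, x₃ u > 0)
    (E F G W : ℝ → ℝ → ℝ)
    (hE : ∀ u v, E u v = dot4 (Xu u v) (Xu u v))
    (hF : ∀ u v, F u v = dot4 (Xu u v) (Xv u v))
    (hG : ∀ u v, G u v = dot4 (Xv u v) (Xv u v))
    (hW : ∀ u v, W u v = Real.sqrt (E u v * G u v - F u v ^ 2))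
    (Gu : ℝ → ℝ → ℝ)
    (hGu : ∀ u v, Gu u v = deriv (fun t => G t v) u)
    (K : ℝ → ℝ → ℝ)
    (hK : ∀ u v, K u v = -(1 / (2 * W u v)) * deriv (fun t => Gu t v / W t v) u)
    : ∀ u v,
      E u v = 1 ∧
      F u v = 0 ∧
      G u v = (1 + lam ^ 2) * x₃ u ^ 2 ∧
      K u v = -(deriv (deriv x₃) u / x₃ u) := by
  have d1 : ∀ u, HasDerivAt x₁ (deriv x₁ u) u := fun u =>
    ((hx₁.differentiable (by simp)) u).hasDerivAt
  have d2 : ∀ u, HasDerivAt x₂ (deriv x₂ u) u := fun u =>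
    ((hx₂.differentiable (by simp)) u).hasDerivAt
  have d3 : ∀ u, HasDerivAt x₃ (deriv x₃ u) u := fun u =>
    ((hx₃.differentiable (by simp)) u).hasDerivAt
  have d4 : ∀ u, HasDerivAt x₄ (deriv x₄ u) u := fun u =>
    ((hx₄.differentiable (by simp)) u).hasDerivAt
  have e4 : ∀ u, deriv x₄ u = lam * deriv x₃ u := by
    intro u
    have h : x₄ = fun u => lam * x₃ u := funext hx₄lam
    rw [h]
    exact ((d3 u).const_mul lam).deriv
  have hu : ∀ u v, Xu u v = ![deriv x₁ u, deriv x₂ u,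
      deriv x₃ u * Real.cos v - deriv x₄ u * Real.sin v,
      deriv x₃ u * Real.sin v + deriv x₄ u * Real.cos v] := by
    intro u v
    rw [hXu]
    apply HasDerivAt.deriv
    rw [hasDerivAt_pi]
    intro i
    simp only [hX]
    fin_cases i
    · exact d1 u
    · exact d2 u
    · exact ((d3 u).mul_const _).sub ((d4 u).mul_const _)
    · exact ((d3 u).mul_const _).add ((d4 u).mul_const _)
  have hv : ∀ u v, Xv u v = ![0, 0,
      x₃ u * (-Real.sin v) - x₄ u * Real.cos v,
      x₃ u * Real.cos v + x₄ u * (-Real.sin v)] := by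
    intro u v
    rw [hXv]
    apply HasDerivAt.deriv
    rw [hasDerivAt_pi]
    intro i
    simp only [hX]
    fin_cases i
    · exact hasDerivAt_const v (x₁ u)
    · exact hasDerivAt_const v (x₂ u)
    · exact ((Real.hasDerivAt_cos v).const_mul _).sub ((Real.hasDerivAt_sin v).const_mul _)
    · exact ((Real.hasDerivAt_sin v).const_mul _).add ((Real.hasDerivAt_cos v).const_mul _)
  have E1 : ∀ u v, E u v = 1 := by
    intro u v
    rw [hE, hu, ← hunit u]
    simp [dot4]
    linear_combination (deriv x₃ u ^ 2 + deriv x₄ u ^ 2) * Real.sin_sq_add_cos_sq v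
  have F0 : ∀ u v, F u v = 0 := by
    intro u v
    rw [hF, hu, hv]
    simp [dot4, e4, hx₄lam]
    ring
  have G1 : ∀ u v, G u v = (1 + lam ^ 2) * x₃ u ^ 2 := by
    intro u v
    rw [hG, hv]
    simp [dot4, hx₄lam]
    linear_combination (x₃ u ^ 2 + lam ^ 2 * x₃ u ^ 2) * Real.sin_sq_add_cos_sq v
  have hc : 0 < 1 + lam ^ 2 := by positivity
  have hs : 0 < Real.sqrt (1 + lam ^ 2) := Real.sqrt_pos.mpr hc
  have hss : Real.sqrt (1 + lam ^ 2) ^ 2 = 1 + lam ^ 2 := Real.sq_sqrt hc.le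
  have W1 : ∀ u v, W u v = Real.sqrt (1 + lam ^ 2) * x₃ u := by
    intro u v
    rw [hW, E1, F0, G1]
    rw [show 1 * ((1 + lam ^ 2) * x₃ u ^ 2) - 0 ^ 2 = (1 + lam ^ 2) * x₃ u ^ 2 by ring,
      Real.sqrt_mul hc.le, Real.sqrt_sq (hx₃pos u).le]
  have Gu1 : ∀ u v, Gu u v = (1 + lam ^ 2) * (2 * x₃ u * deriv x₃ u) := by
    intro u v
    rw [hGu]
    simp only [G1]
    have h := ((d3 u).pow 2).const_mul (1 + lam ^ 2)
    have h2 := h.deriv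
    simpa using h2
  intro u v
  refine ⟨E1 u v, F0 u v, G1 u v, ?_⟩
  have hq : (fun t => Gu t v / W t v)
      = fun t => (2 * Real.sqrt (1 + lam ^ 2)) * deriv x₃ t := by
    funext t
    have h3 := (hx₃pos t).ne'
    rw [Gu1, W1, div_eq_iff (mul_ne_zero hs.ne' h3)]
    linear_combination (-2 * x₃ t * deriv x₃ t) * hss
  have h3 := (hx₃pos u).ne'
  have hs' := hs.ne'
  rw [hK, hq, W1, deriv_const_mul_field]
  field_simp
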